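/- Let z be a real number with 0 < z < 1 and let a, b, d be complex numbers such that 2a+1 and d are not nonpositive integers or zero, a+1/2 and a+3/2 are not nonpositive integers or zero, and Re(2a+1 + d − a − b − (d+1)) > 0 so that all series below converge. Then (1+z)^{−b} · Σ_{k=0}^∞ (a)_k (b)_k (d+1)_k (2z/(1+z))^k / ((2a+1)_k (d)_k k!) = Σ_{k=0}^∞ (b/2)_k ((b+1)/2)_k z^{2k} / ((a+1/2)_k k!) − ((1 − 2a/d) b /(2a+1)) · z · Σ_{k=0}^∞ ((b+1)/2)_k (b/2+1)_k z^{2k} / ((a+3/2)_k k!). -/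

import Mathlib

/-- The Pochhammer symbol `(a)_k = a (a+1) ⋯ (a+k-1)`. -/
noncomputable def poch (a : ℂ) (k : ℕ) : ℂ := Polynomial.eval a (ascPochhammer ℂ k)

open Filter Topology

lemma poch_zero (a : ℂ) : poch a 0 = 1 := by simp [poch]

lemma poch_succ (a : ℂ) (k : ℕ) : poch a (k + 1) = poch a k * (a + k) := by
  simp [poch, ascPochhammer_succ_eval]

lemma poch_ne (a : ℂ) (h : ∀ n : ℕ, a ≠ -(n : ℂ)) (k : ℕ) : poch a k ≠ 0 := by
  induction k with
  | zero => simp [poch_zero]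
  | succ k ih =>
    rw [poch_succ]
    refine mul_ne_zero ih fun h' => h k (eq_neg_of_add_eq_zero_left h')

lemma poch_add (b : ℂ) (k j : ℕ) : poch b (k + j) = poch b k * poch (b + k) j := by
  induction j with
  | zero => simp [poch_zero]
  | succ j ih =>
    rw [← add_assoc, poch_succ, ih, poch_succ]
    push_cast
    ring

lemma poch_left (b : ℂ) (n : ℕ) : poch b (n + 1) = b * poch (b + 1) n := by
  rw [add_comm, poch_add]
  simp [poch_succ, poch_zero]

lemma poch_dup (b : ℂ) (m : ℕ) :
    poch (b / 2) m * poch ((b + 1) / 2) m * 4 ^ m = poch b (2 * m) := by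
  induction m with
  | zero => simp [poch_zero]
  | succ m ih =>
    rw [show 2 * (m + 1) = 2 * m + 1 + 1 by ring, poch_succ b, poch_succ b, ← ih, poch_succ,
      poch_succ]
    push_cast
    ring

/-- binomial transform -/
noncomputable def bt (f : ℕ → ℂ) (n : ℕ) : ℂ :=
  ∑ k ∈ Finset.range (n + 1), (n.choose k : ℂ) * f k

lemma bt_add (f g : ℕ → ℂ) (n : ℕ) : bt (fun k => f k + g k) n = bt f n + bt g n := by
  simp [bt, mul_add, Finset.sum_add_distrib]

lemma bt_smul (c : ℂ) (f : ℕ → ℂ) (n : ℕ) : bt (fun k => c * f k) n = c * bt f n := by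
  simp only [bt, Finset.mul_sum]
  exact Finset.sum_congr rfl fun k _ => by ring

lemma bt_succ (f : ℕ → ℂ) (n : ℕ) : bt f (n + 1) = bt f n + bt (fun k => f (k + 1)) n := by
  unfold bt
  rw [Finset.sum_range_succ']
  simp only [Nat.choose_succ_succ, Nat.cast_add, add_mul, Finset.sum_add_distrib]
  have := Finset.sum_range_succ' (fun k => (n.choose k : ℂ) * f k) (n + 1)
  rw [Finset.sum_range_succ] at this
  simp only [Nat.choose_succ_self, Nat.cast_zero, zero_mul, add_zero, Nat.choose_zero_right,
    Nat.succ_eq_add_one] at this ⊢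
  rw [this]
  ring

lemma bt_k (f : ℕ → ℂ) (n : ℕ) :
    bt (fun k => (k : ℂ) * f k) (n + 1) = (n + 1) * bt (fun k => f (k + 1)) n := by
  unfold bt
  rw [Finset.sum_range_succ', Finset.mul_sum]
  simp only [Nat.cast_zero, zero_mul, mul_zero, add_zero]
  refine Finset.sum_congr rfl fun k _ => ?_
  have := Nat.add_one_mul_choose_eq n k
  have h2 : ((n : ℂ) + 1) * (n.choose k : ℂ) = ((n + 1).choose (k + 1) : ℂ) * (k + 1) := by
    exact_mod_cast this
  rw [← mul_assoc, ← mul_assoc, h2]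
  push_cast
  ring

noncomputable def uu (a : ℂ) (k : ℕ) : ℂ := (-2) ^ k * poch a k / poch (2 * a + 1) k

lemma bt_rec (a : ℂ) (h2a1 : ∀ n : ℕ, 2 * a + 1 ≠ -(n : ℂ)) (n : ℕ) :
    (2 * a + 2 + n) * bt (uu a) (n + 2) = bt (uu a) (n + 1) + (n + 1) * bt (uu a) n := by
  have hu : ∀ k, (2 * a + 1) * uu a (k + 1) + ((k : ℂ) * uu a (k + 1)
      + (2 * a * uu a k + 2 * (k * uu a k))) = 0 := by
    intro k
    have h1 := poch_ne _ h2a1 k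
    have h2 : 2 * a + 1 + k ≠ 0 := fun h' => h2a1 k (eq_neg_of_add_eq_zero_left h')
    unfold uu
    rw [poch_succ, poch_succ]
    field_simp
    ring
  have h0 : bt (fun k => (2 * a + 1) * uu a (k + 1) + ((k : ℂ) * uu a (k + 1)
      + (2 * a * uu a k + 2 * (k * uu a k)))) (n + 1) = 0 := by
    simp [hu, bt]
  rw [bt_add, bt_add, bt_add, bt_smul, bt_smul, bt_smul, bt_k (fun k => uu a (k + 1)),
    bt_k] at h0
  have e1 := bt_succ (uu a) (n + 1)
  have e2 := bt_succ (uu a) n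
  have e3 := bt_succ (fun k => uu a (k + 1)) n
  have e4 : bt (fun k => uu a (k + 1)) n = bt (uu a) (n + 1) - bt (uu a) n := by rw [e2]; ring
  have e5 : bt (fun k => uu a (k + 1)) (n + 1) = bt (uu a) (n + 2) - bt (uu a) (n + 1) := by
    rw [e1]; ring
  have e6 : bt (fun k => uu a (k + 1 + 1)) n
    = bt (uu a) (n + 2) - bt (uu a) (n + 1) - (bt (uu a) (n + 1) - bt (uu a) n) := by
    rw [← e4, ← e5, e3]; ring
  rw [e6, e5, e4] at h0
  linear_combination h0

lemma bt_both (a : ℂ) (h2a1 : ∀ n : ℕ, 2 * a + 1 ≠ -(n : ℂ))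
    (ha1 : ∀ n : ℕ, a + 1 / 2 ≠ -(n : ℂ)) (m : ℕ) :
    bt (uu a) (2 * m) = (2 * m).factorial / (4 ^ m * m.factorial * poch (a + 1 / 2) m) ∧
    (2 * a + 1 + 2 * m) * bt (uu a) (2 * m + 1) = (2 * m + 1) * bt (uu a) (2 * m) := by
  induction m with
  | zero =>
    have : 2 * a + 1 ≠ 0 := by simpa using h2a1 0
    constructor
    · simp [bt, uu, poch_zero]
    · simp [bt, uu, poch_zero, Finset.sum_range_succ, poch_succ]
      field_simp
      ring
  | succ m ih =>
    obtain ⟨h1, h2⟩ := ih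
    have r1 := bt_rec a h2a1 (2 * m)
    have r2 := bt_rec a h2a1 (2 * m + 1)
    have n1 : 2 * a + 2 + 2 * m ≠ 0 := fun h => h2a1 (2 * m + 1) (by push_cast; linear_combination h)
    have n2 : 2 * a + 1 + 2 * m ≠ 0 := fun h => h2a1 (2 * m) (by push_cast; linear_combination h)
    have n3 : a + 1 / 2 + m ≠ 0 := fun h => ha1 m (by linear_combination h)
    have n4 := poch_ne _ ha1 m
    push_cast at r1 r2
    have e : bt (uu a) (2 * m + 2) = bt (uu a) (2 * m + 1) := by
      apply mul_left_cancel₀ n1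
      rw [r1]
      linear_combination -h2
    rw [show 2 * (m + 1) = 2 * m + 2 by ring]
    constructor
    · rw [e]
      apply mul_left_cancel₀ n2
      rw [h2, h1, poch_succ, show 2 * m + 2 = 2 * m + 1 + 1 by ring, Nat.factorial_succ,
        Nat.factorial_succ, Nat.factorial_succ, pow_succ]
      have f1 : (m.factorial : ℂ) ≠ 0 := by exact_mod_cast m.factorial_ne_zero
      have f2 : (m : ℂ) + 1 ≠ 0 := by exact_mod_cast m.succ_ne_zero
      have n3' : 2 * (a + 1 / 2 + m) = 2 * a + 1 + 2 * m := by ring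
      push_cast
      rw [← n3']
      generalize a + 1 / 2 + (m : ℂ) = y at *
      field_simp
      ring
    · push_cast
      rw [show 2 * m + 2 + 1 = 2 * m + 1 + 2 by ring]
      rw [← show 2 * m + 1 + 1 = 2 * m + 2 by ring] at e
      rw [← show 2 * m + 1 + 1 = 2 * m + 2 by ring]
      linear_combination r2 - (2 * m + 1 + 1) * e

noncomputable def tt (a d : ℂ) (k : ℕ) : ℂ := poch a k / poch (2 * a + 1) k * ((d + k) / d)

lemma bt_tt (a d : ℂ) (hd : d ≠ 0) (n : ℕ) :
    bt (fun k => (-2) ^ k * tt a d k) n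
      = bt (uu a) n + (1 / d) * bt (fun k => k * uu a k) n := by
  rw [← bt_smul, ← bt_add]
  congr 1
  funext k
  unfold tt uu
  field_simp

lemma bt_tt_even (a d : ℂ) (hd : d ≠ 0) (h2a1 : ∀ n : ℕ, 2 * a + 1 ≠ -(n : ℂ))
    (ha1 : ∀ n : ℕ, a + 1 / 2 ≠ -(n : ℂ)) (m : ℕ) :
    bt (fun k => (-2) ^ k * tt a d k) (2 * m)
      = (2 * m).factorial / (4 ^ m * m.factorial * poch (a + 1 / 2) m) := by
  rw [bt_tt a d hd, ← (bt_both a h2a1 ha1 m).1]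
  rcases m with _ | m
  · simp [bt]
  · have h2 := (bt_both a h2a1 ha1 m).2
    have r1 := bt_rec a h2a1 (2 * m)
    have n1 : 2 * a + 2 + 2 * m ≠ 0 := fun h => h2a1 (2 * m + 1) (by push_cast; linear_combination h)
    push_cast at r1
    have e : bt (uu a) (2 * m + 1 + 1) = bt (uu a) (2 * m + 1) := by
      apply mul_left_cancel₀ n1
      rw [r1]
      linear_combination -h2
    rw [show 2 * (m + 1) = 2 * m + 1 + 1 by ring, bt_k]
    have e2 := bt_succ (uu a) (2 * m + 1)
    rw [e] at e2
    rw [show bt (fun k => uu a (k + 1)) (2 * m + 1) = 0 by linear_combination -e2]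
    simp

lemma bt_tt_odd (a d : ℂ) (hd : d ≠ 0) (h2a1 : ∀ n : ℕ, 2 * a + 1 ≠ -(n : ℂ))
    (ha1 : ∀ n : ℕ, a + 1 / 2 ≠ -(n : ℂ)) (ha3 : ∀ n : ℕ, a + 3 / 2 ≠ -(n : ℂ)) (m : ℕ) :
    bt (fun k => (-2) ^ k * tt a d k) (2 * m + 1)
      = (1 - 2 * a / d) * (2 * m + 1).factorial /
        (4 ^ m * m.factorial * ((2 * a + 1) * poch (a + 3 / 2) m)) := by
  obtain ⟨h1, h2⟩ := bt_both a h2a1 ha1 m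
  have e2 := bt_succ (uu a) (2 * m)
  have n0 : 2 * a + 1 ≠ 0 := by simpa using h2a1 0
  have n2 : 2 * a + 1 + 2 * m ≠ 0 := fun h => h2a1 (2 * m) (by push_cast; linear_combination h)
  have n4 := poch_ne _ ha1 m
  have n5 := poch_ne _ ha3 m
  have f1 : (m.factorial : ℂ) ≠ 0 := by exact_mod_cast m.factorial_ne_zero
  have hp : (a + 1 / 2) * poch (a + 3 / 2) m = poch (a + 1 / 2) m * (a + 1 / 2 + m) := by
    rw [← poch_succ, poch_left]
    congr 2
    ring
  have n3 : a + 1 / 2 + m ≠ 0 := fun h => ha1 m (by linear_combination h)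
  have hp' : (2 * a + 1) * poch (a + 3 / 2) m = 2 * (poch (a + 1 / 2) m * (a + 1 / 2 + m)) := by
    linear_combination 2 * hp
  have key : bt (fun k => (-2) ^ k * tt a d k) (2 * m + 1)
      = (1 - 2 * a / d) * bt (uu a) (2 * m + 1) := by
    rw [bt_tt a d hd, bt_k]
    rw [show bt (fun k => uu a (k + 1)) (2 * m) = bt (uu a) (2 * m + 1) - bt (uu a) (2 * m) by
      rw [e2]; ring]
    push_cast
    field_simp
    linear_combination h2
  rw [key, mul_div_assoc (1 - 2 * a / d)]
  congr 1
  apply mul_left_cancel₀ n2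
  rw [h2, h1, hp', Nat.factorial_succ, show 2 * a + 1 + 2 * m = 2 * (a + 1 / 2 + m) by ring]
  push_cast
  generalize a + 1 / 2 + (m : ℂ) = y at *
  field_simp

lemma binom_hasSum (c z : ℂ) (hz : ‖z‖ < 1) :
    HasSum (fun j : ℕ => poch c j / j.factorial * (-z) ^ j) ((1 + z) ^ (-c)) := by
  have := (Complex.one_add_cpow_hasFPowerSeriesOnBall_zero (a := -c)).hasSum
    (y := z) (by simpa [← ENNReal.ofReal_one, Metric.eball_ofReal] using hz)
  simp only [zero_add] at this
  have e : (fun j : ℕ => poch c j / j.factorial * (-z) ^ j)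
      = fun n => (binomialSeries ℂ (𝕂 := ℂ) (-c) n) fun _ => z := by
    funext j
    simp only [binomialSeries_apply, List.ofFn_const, List.prod_replicate, smul_eq_mul]
    rw [Ring.choose_eq_smul, Polynomial.descPochhammer_smeval_eq_ascPochhammer,
      Polynomial.ascPochhammer_smeval_cast, Polynomial.ascPochhammer_smeval_eq_eval]
    have h := ascPochhammer_eval_neg_eq_descPochhammer ℂ (-c) j
    rw [descPochhammer_eval_eq_ascPochhammer, neg_neg] at h
    rw [poch, h, neg_pow]
    simp only [smul_eq_mul]
    have : ((-1 : ℂ) ^ j) * (-1) ^ j = 1 := by rw [← mul_pow]; simp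
    push_cast
    linear_combination (Polynomial.eval (-c - j + 1) (ascPochhammer ℂ j)) / j.factorial * z ^ j * this
  rw [e]
  exact this

def SubExp (c : ℕ → ℂ) : Prop := ∀ r : ℝ, 0 ≤ r → r < 1 → Summable fun k => ‖c k‖ * r ^ k

lemma ratio_tendsto (x y : ℂ) :
    Tendsto (fun k : ℕ => (x + k) / (y + k)) atTop (𝓝 1) := by
  simpa using tendsto_add_mul_div_add_mul_atTop_nhds x y (1 : ℂ) (d := (1 : ℂ)) one_ne_zero

lemma subExp_of_ratio (c q : ℕ → ℂ) (h : ∀ k, c (k + 1) = q k * c k)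
    (hq : Tendsto q atTop (𝓝 1)) : SubExp c := by
  intro r hr0 hr1
  have h1 : Tendsto (fun k => ‖q k‖ * r) atTop (𝓝 r) := by
    simpa using hq.norm.mul_const r
  obtain ⟨s, hs1, hs2⟩ := exists_between hr1
  refine summable_of_ratio_norm_eventually_le (r := s) hs2 ?_
  filter_upwards [h1.eventually_lt_const hs1] with k hk
  rw [h, norm_mul (q k), pow_succ, Real.norm_of_nonneg (by positivity),
    Real.norm_of_nonneg (by positivity)]
  calc ‖q k‖ * ‖c k‖ * (r ^ k * r) = (‖q k‖ * r) * (‖c k‖ * r ^ k) := by ring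
    _ ≤ s * (‖c k‖ * r ^ k) := by gcongr

lemma SubExp.bound {c : ℕ → ℂ} (h : SubExp c) : ∃ M : ℝ, 0 ≤ M ∧ ∀ k, ‖c k‖ ≤ M * 2 ^ k := by
  have hs := h (1 / 2) (by norm_num) (by norm_num)
  refine ⟨∑' k, ‖c k‖ * (1 / 2) ^ k, tsum_nonneg fun k => by positivity, fun k => ?_⟩
  have := hs.le_tsum k fun j _ => by positivity
  calc ‖c k‖ = ‖c k‖ * (1 / 2) ^ k * 2 ^ k := by
        rw [mul_assoc, ← mul_pow]; norm_num
    _ ≤ _ := by gcongr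

lemma SubExp.summable {c : ℕ → ℂ} (h : SubExp c) (w : ℂ) (hw : ‖w‖ < 1) :
    Summable fun k => c k * w ^ k := by
  refine Summable.of_norm ?_
  simpa using h ‖w‖ (norm_nonneg _) hw

lemma SubExp.diff {c : ℕ → ℂ} (h : SubExp c) (w : ℂ) (hw : ‖w‖ < 1) :
    DifferentiableAt ℂ (fun w => ∑' k, c k * w ^ k) w := by
  obtain ⟨s, hs1, hs2⟩ := exists_between hw
  have : DifferentiableOn ℂ (fun w => ∑' k, c k * w ^ k) (Metric.ball 0 s) := by
    refine Complex.differentiableOn_tsum_of_summable_norm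
      (h s ((norm_nonneg w).trans hs1.le) hs2) (fun k => by fun_prop) Metric.isOpen_ball ?_
    intro k v hv
    rw [norm_mul, norm_pow]
    have : ‖v‖ ≤ s := by simpa using (mem_ball_zero_iff.mp hv).le
    gcongr
  exact this.differentiableAt (Metric.isOpen_ball.mem_nhds (by simpa using hs1))

lemma ne_add {y : ℂ} (h : ∀ n : ℕ, y ≠ -(n : ℂ)) (k : ℕ) : y + k ≠ 0 :=
  fun h' => h k (eq_neg_of_add_eq_zero_left h')

lemma subExp_hyp (A B C : ℂ) (hC : ∀ n : ℕ, C ≠ -(n : ℂ)) :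
    SubExp fun k => poch A k * poch B k / (poch C k * k.factorial) := by
  refine subExp_of_ratio _ (fun k => ((A + k) / (C + k)) * ((B + k) / (1 + k))) (fun k => ?_) ?_
  · have h1 := poch_ne _ hC k
    have h2 := ne_add hC k
    have f1 : (k.factorial : ℂ) ≠ 0 := by exact_mod_cast k.factorial_ne_zero
    have f2 : (1 : ℂ) + k ≠ 0 := by rw [add_comm]; exact_mod_cast k.succ_ne_zero
    rw [poch_succ, poch_succ, poch_succ, Nat.factorial_succ]
    push_cast
    rw [add_comm (k : ℂ) 1]
    field_simp
  · simpa using (ratio_tendsto A C).mul (ratio_tendsto B 1)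

lemma subExp_bin (b : ℂ) : SubExp fun k => poch b k / k.factorial := by
  refine subExp_of_ratio _ (fun k => (b + k) / (1 + k)) (fun k => ?_) (ratio_tendsto b 1)
  have f1 : (k.factorial : ℂ) ≠ 0 := by exact_mod_cast k.factorial_ne_zero
  have f2 : (1 : ℂ) + k ≠ 0 := by rw [add_comm]; exact_mod_cast k.succ_ne_zero
  rw [poch_succ, Nat.factorial_succ]
  push_cast
  rw [add_comm (k : ℂ) 1]
  field_simp

lemma tt_succ (a d : ℂ) (h2a1 : ∀ n : ℕ, 2 * a + 1 ≠ -(n : ℂ))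
    (hd : ∀ n : ℕ, d ≠ -(n : ℂ)) (k : ℕ) :
    tt a d (k + 1) = ((a + k) / (2 * a + 1 + k)) * ((d + 1 + k) / (d + k)) * tt a d k := by
  have h1 := poch_ne _ h2a1 k
  have h2 := ne_add h2a1 k
  have h3 := ne_add hd k
  have h4 : d ≠ 0 := by simpa using hd 0
  unfold tt
  rw [poch_succ, poch_succ]
  push_cast
  generalize 2 * a + 1 + (k : ℂ) = y at *
  field_simp
  ring

lemma subExp_tt (a d : ℂ) (h2a1 : ∀ n : ℕ, 2 * a + 1 ≠ -(n : ℂ))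
    (hd : ∀ n : ℕ, d ≠ -(n : ℂ)) : SubExp (tt a d) := by
  refine subExp_of_ratio _ _ (tt_succ a d h2a1 hd) ?_
  simpa using (ratio_tendsto a (2 * a + 1)).mul (ratio_tendsto (d + 1) d)

lemma subExp_lhs (a b d : ℂ) (h2a1 : ∀ n : ℕ, 2 * a + 1 ≠ -(n : ℂ))
    (hd : ∀ n : ℕ, d ≠ -(n : ℂ)) : SubExp fun k => tt a d k * (poch b k / k.factorial) := by
  refine subExp_of_ratio _ (fun k => ((a + k) / (2 * a + 1 + k)) * ((d + 1 + k) / (d + k)) *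
    ((b + k) / (1 + k))) (fun k => ?_) ?_
  · have f1 : (k.factorial : ℂ) ≠ 0 := by exact_mod_cast k.factorial_ne_zero
    have f2 : (1 : ℂ) + k ≠ 0 := by rw [add_comm]; exact_mod_cast k.succ_ne_zero
    rw [tt_succ a d h2a1 hd, poch_succ, Nat.factorial_succ]
    push_cast
    rw [add_comm (k : ℂ) 1]
    field_simp
  · simpa using ((ratio_tendsto a (2 * a + 1)).mul (ratio_tendsto (d + 1) d)).mul
      (ratio_tendsto b 1)

lemma poch_d (d : ℂ) (hd : ∀ n : ℕ, d ≠ -(n : ℂ)) (k : ℕ) :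
    poch (d + 1) k / poch d k = (d + k) / d := by
  have h1 := poch_ne _ hd k
  have h4 : d ≠ 0 := by simpa using hd 0
  rw [div_eq_div_iff h1 h4, mul_comm _ d, ← poch_left, poch_succ, mul_comm]

/-- The double series. -/
noncomputable def FF (a b d z : ℂ) (p : ℕ × ℕ) : ℂ :=
  tt a d p.1 * (poch b (p.1 + p.2) / (p.1 + p.2).factorial) * ((p.1 + p.2).choose p.1 : ℂ) *
    (2 * z) ^ p.1 * (-z) ^ p.2

lemma FF_summable (a b d z : ℂ) (h2a1 : ∀ n : ℕ, 2 * a + 1 ≠ -(n : ℂ))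
    (hd : ∀ n : ℕ, d ≠ -(n : ℂ)) (hz : ‖z‖ < 1 / 16) : Summable (FF a b d z) := by
  obtain ⟨M, hM0, hM⟩ := (subExp_tt a d h2a1 hd).bound
  obtain ⟨N, hN0, hN⟩ := (subExp_bin b).bound
  have s1 : Summable fun k : ℕ => (16 * ‖z‖) ^ k :=
    summable_geometric_of_lt_one (by positivity) (by linarith)
  have s2 : Summable fun k : ℕ => (4 * ‖z‖) ^ k :=
    summable_geometric_of_lt_one (by positivity) (by linarith)
  have s := (s1.mul_of_nonneg s2 (fun k => by positivity) (fun k => by positivity)).mul_left (M * N)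
  refine Summable.of_norm_bounded s ?_
  rintro ⟨k, j⟩
  have hc : ((k + j).choose k : ℝ) ≤ 2 ^ (k + j) := by
    exact_mod_cast Nat.choose_le_two_pow (k + j) k
  have h2 := hN (k + j)
  have h1 := hM k
  simp only [FF]
  rw [norm_mul, norm_mul, norm_mul, norm_mul, norm_pow, norm_pow, norm_neg, norm_mul,
    Complex.norm_natCast, Complex.norm_ofNat]
  calc _ ≤ (M * 2 ^ k) * (N * 2 ^ (k + j)) * 2 ^ (k + j) * (2 * ‖z‖) ^ k * ‖z‖ ^ j := by
        gcongr
    _ = _ := by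
        rw [show (16 : ℝ) = 2 * 2 * 2 * 2 by norm_num, show (4 : ℝ) = 2 * 2 by norm_num]
        simp only [mul_pow, pow_add]
        ring

lemma FF_fst (a b d z : ℂ) (h2a1 : ∀ n : ℕ, 2 * a + 1 ≠ -(n : ℂ))
    (hd : ∀ n : ℕ, d ≠ -(n : ℂ)) (hz : ‖z‖ < 1 / 16) :
    ∑' p, FF a b d z p = (1 + z) ^ (-b) *
      ∑' k : ℕ, (tt a d k * (poch b k / k.factorial)) * (2 * z / (1 + z)) ^ k := by
  rw [(FF_summable a b d z h2a1 hd hz).tsum_prod, ← tsum_mul_left]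
  congr 1
  funext k
  have hz' : ‖z‖ < 1 := by linarith
  have hne : 1 + z ≠ 0 := Complex.slitPlane_ne_zero (Complex.mem_slitPlane_of_norm_lt_one hz')
  have h := (binom_hasSum (b + k) z hz').mul_left
    (tt a d k * (poch b k / k.factorial) * (2 * z) ^ k)
  have e : (1 + z) ^ (-b) * (tt a d k * (poch b k / k.factorial) * (2 * z / (1 + z)) ^ k)
    = tt a d k * (poch b k / k.factorial) * (2 * z) ^ k * (1 + z) ^ (-(b + k)) := by
    rw [neg_add, ← sub_eq_add_neg, Complex.cpow_sub _ _ hne, Complex.cpow_natCast, div_pow]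
    ring
  rw [e, ← h.tsum_eq]
  congr 1
  funext j
  simp only [FF]
  rw [poch_add, Nat.cast_add_choose]
  have f1 : (k.factorial : ℂ) ≠ 0 := by exact_mod_cast k.factorial_ne_zero
  have f2 : (j.factorial : ℂ) ≠ 0 := by exact_mod_cast j.factorial_ne_zero
  have f3 : ((k + j).factorial : ℂ) ≠ 0 := by exact_mod_cast (k + j).factorial_ne_zero
  field_simp

lemma FF_anti (a b d z : ℂ) (h2a1 : ∀ n : ℕ, 2 * a + 1 ≠ -(n : ℂ))
    (hd : ∀ n : ℕ, d ≠ -(n : ℂ)) (hz : ‖z‖ < 1 / 16) :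
    ∑' p, FF a b d z p = ∑' n : ℕ, (poch b n / n.factorial) * (-z) ^ n *
      bt (fun k => (-2) ^ k * tt a d k) n := by
  have hs := FF_summable a b d z h2a1 hd hz
  rw [← Finset.HasAntidiagonal.sigmaAntidiagonalEquivProd.tsum_eq]
  have hs' : Summable fun c : (n : ℕ) × Finset.HasAntidiagonal.antidiagonal n =>
      FF a b d z (Finset.HasAntidiagonal.sigmaAntidiagonalEquivProd c) :=
    Finset.HasAntidiagonal.sigmaAntidiagonalEquivProd.summable_iff.mpr hs
  rw [hs'.tsum_sigma]
  congr 1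
  funext n
  rw [tsum_fintype]
  simp only [Finset.HasAntidiagonal.sigmaAntidiagonalEquivProd_apply]
  rw [Finset.sum_coe_sort (Finset.HasAntidiagonal.antidiagonal n) (FF a b d z),
    Finset.Nat.sum_antidiagonal_eq_sum_range_succ_mk, bt, Finset.mul_sum]
  refine Finset.sum_congr rfl fun k hk => ?_
  have hk' : k ≤ n := by simpa [Nat.lt_succ_iff] using hk
  obtain ⟨j, rfl⟩ := Nat.exists_eq_add_of_le hk'
  simp only [FF, Nat.add_sub_cancel_left]
  rw [show 2 * z = (-2) * (-z) by ring, mul_pow, pow_add]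
  ring

lemma local_eq (a b d z : ℂ) (h2a1 : ∀ n : ℕ, 2 * a + 1 ≠ -(n : ℂ))
    (hd : ∀ n : ℕ, d ≠ -(n : ℂ)) (ha1 : ∀ n : ℕ, a + 1 / 2 ≠ -(n : ℂ))
    (ha3 : ∀ n : ℕ, a + 3 / 2 ≠ -(n : ℂ)) (hz : ‖z‖ < 1 / 16) :
    (1 + z) ^ (-b) * ∑' k : ℕ, (tt a d k * (poch b k / k.factorial)) * (2 * z / (1 + z)) ^ k
      = (∑' k : ℕ, poch (b / 2) k * poch ((b + 1) / 2) k / (poch (a + 1 / 2) k * k.factorial)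
          * (z ^ 2) ^ k)
        - ((1 - 2 * a / d) * b / (2 * a + 1)) * z *
          ∑' k : ℕ, poch ((b + 1) / 2) k * poch (b / 2 + 1) k /
            (poch (a + 3 / 2) k * k.factorial) * (z ^ 2) ^ k := by
  have hd0 : d ≠ 0 := by simpa using hd 0
  have n0 : 2 * a + 1 ≠ 0 := by simpa using h2a1 0
  have hz2 : ‖z ^ 2‖ < 1 := by
    rw [norm_pow]
    have := norm_nonneg z
    nlinarith
  have s1 := (subExp_hyp (b / 2) ((b + 1) / 2) (a + 1 / 2) ha1).summable (z ^ 2) hz2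
  have s2 := ((subExp_hyp ((b + 1) / 2) (b / 2 + 1) (a + 3 / 2) ha3).summable (z ^ 2) hz2).mul_left
    (-(((1 - 2 * a / d) * b / (2 * a + 1)) * z))
  rw [← FF_fst a b d z h2a1 hd hz, FF_anti a b d z h2a1 hd hz]
  have e1 : ∀ m : ℕ, (poch b (2 * m) / (2 * m).factorial) * (-z) ^ (2 * m) *
      bt (fun k => (-2) ^ k * tt a d k) (2 * m) =
      poch (b / 2) m * poch ((b + 1) / 2) m / (poch (a + 1 / 2) m * m.factorial)
          * (z ^ 2) ^ m := by
    intro m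
    rw [bt_tt_even a d hd0 h2a1 ha1, ← poch_dup, pow_mul, neg_sq]
    have f1 : (m.factorial : ℂ) ≠ 0 := by exact_mod_cast m.factorial_ne_zero
    have f2 : ((2 * m).factorial : ℂ) ≠ 0 := by exact_mod_cast (2 * m).factorial_ne_zero
    have f3 := poch_ne _ ha1 m
    field_simp
  have e2 : ∀ m : ℕ, (poch b (2 * m + 1) / (2 * m + 1).factorial) * (-z) ^ (2 * m + 1) *
      bt (fun k => (-2) ^ k * tt a d k) (2 * m + 1) =
      -(((1 - 2 * a / d) * b / (2 * a + 1)) * z) *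
      (poch ((b + 1) / 2) m * poch (b / 2 + 1) m / (poch (a + 3 / 2) m * m.factorial)
          * (z ^ 2) ^ m) := by
    intro m
    rw [bt_tt_odd a d hd0 h2a1 ha1 ha3, poch_left, ← poch_dup, pow_succ, pow_mul, neg_sq,
      show (b + 1 + 1) / 2 = b / 2 + 1 by ring]
    have f1 : (m.factorial : ℂ) ≠ 0 := by exact_mod_cast m.factorial_ne_zero
    have f2 : ((2 * m + 1).factorial : ℂ) ≠ 0 := by exact_mod_cast (2 * m + 1).factorial_ne_zero
    have f3 := poch_ne _ ha3 m
    field_simp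
  rw [← tsum_even_add_odd (by simpa only [e1] using s1) (by simpa only [e2] using s2)]
  simp only [e1, e2]
  rw [tsum_mul_left]
  ring

lemma region (z : ℂ) (hz : z ∈ Metric.ball (1 / 3 : ℂ) (2 / 3)) :
    1 + z ∈ Complex.slitPlane ∧ ‖2 * z / (1 + z)‖ < 1 ∧ ‖z ^ 2‖ < 1 := by
  rw [Metric.mem_ball, dist_eq_norm] at hz
  have hsq : Complex.normSq (z - 1 / 3) < (2 / 3) ^ 2 := by
    rw [Complex.normSq_eq_norm_sq]
    gcongr
  have e : (z - 1 / 3).re = z.re - 1 / 3 ∧ (z - 1 / 3).im = z.im := by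
    rw [show (1 / 3 : ℂ) = ((1 / 3 : ℝ) : ℂ) by norm_num]
    constructor
    · rw [Complex.sub_re, Complex.ofReal_re]
    · rw [Complex.sub_im, Complex.ofReal_im, sub_zero]
  rw [Complex.normSq_apply, e.1, e.2] at hsq
  have hre : -1 / 3 < z.re := by nlinarith [mul_self_nonneg z.im]
  have hre2 : z.re < 1 := by nlinarith [mul_self_nonneg z.im]
  have hs : 1 + z ∈ Complex.slitPlane := Or.inl (by simp; linarith)
  refine ⟨hs, ?_, ?_⟩
  · rw [norm_div, div_lt_one (norm_pos_iff.mpr (Complex.slitPlane_ne_zero hs))]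
    apply lt_of_pow_lt_pow_left₀ 2 (norm_nonneg _)
    rw [← Complex.normSq_eq_norm_sq, ← Complex.normSq_eq_norm_sq, Complex.normSq_apply,
      Complex.normSq_apply]
    simp
    nlinarith
  · rw [norm_pow, ← Complex.normSq_eq_norm_sq, Complex.normSq_apply]
    nlinarith

/-- Example (c) of the paper: for `0 < z < 1`,
`(1+z)^{-b} ₃F₂(a, b, d+1; 2a+1, d; 2z/(1+z))
  = ₂F₁(b/2, (b+1)/2; a+1/2; z²) - ((1-2a/d)b/(2a+1)) z ₂F₁((b+1)/2, b/2+1; a+3/2; z²)`. -/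
theorem example_binomial
    (z : ℝ) (hz0 : 0 < z) (hz1 : z < 1)
    (a b d : ℂ)
    (h2a1 : ∀ n : ℕ, 2 * a + 1 ≠ -(n : ℂ))
    (hd : ∀ n : ℕ, d ≠ -(n : ℂ))
    (ha1 : ∀ n : ℕ, a + 1 / 2 ≠ -(n : ℂ))
    (ha3 : ∀ n : ℕ, a + 3 / 2 ≠ -(n : ℂ))
    (hconv : (2 * a + 1 + d - a - b - (d + 1)).re > 0) :
    ((1 : ℂ) + (z : ℂ)) ^ (-b) *
        ∑' k : ℕ, poch a k * poch b k * poch (d + 1) k *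
          (2 * (z : ℂ) / (1 + (z : ℂ))) ^ k /
          (poch (2 * a + 1) k * poch d k * (Nat.factorial k : ℂ))
      = (∑' k : ℕ, poch (b / 2) k * poch ((b + 1) / 2) k * ((z : ℂ) ^ 2) ^ k /
            (poch (a + 1 / 2) k * (Nat.factorial k : ℂ)))
        - ((1 - 2 * a / d) * b / (2 * a + 1)) * (z : ℂ) *
          ∑' k : ℕ, poch ((b + 1) / 2) k * poch (b / 2 + 1) k * ((z : ℂ) ^ 2) ^ k /
            (poch (a + 3 / 2) k * (Nat.factorial k : ℂ)) := by
  have hL : AnalyticOnNhd ℂ (fun z : ℂ => (1 + z) ^ (-b) * ∑' k : ℕ,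
      (tt a d k * (poch b k / k.factorial)) * (2 * z / (1 + z)) ^ k)
      (Metric.ball (1 / 3 : ℂ) (2 / 3)) := by
    refine DifferentiableOn.analyticOnNhd (fun z hz => ?_) Metric.isOpen_ball
    obtain ⟨h1, h2, h3⟩ := region z hz
    have hne := Complex.slitPlane_ne_zero h1
    refine DifferentiableAt.differentiableWithinAt (DifferentiableAt.mul ?_ ?_)
    · exact DifferentiableAt.cpow (by fun_prop) (by fun_prop) h1
    · have hw : DifferentiableAt ℂ (fun z : ℂ => 2 * z / (1 + z)) z :=
        DifferentiableAt.div (by fun_prop) (by fun_prop) hne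
      exact ((subExp_lhs a b d h2a1 hd).diff _ h2).comp z hw
  have hR : AnalyticOnNhd ℂ (fun z : ℂ =>
      (∑' k : ℕ, poch (b / 2) k * poch ((b + 1) / 2) k / (poch (a + 1 / 2) k * k.factorial)
          * (z ^ 2) ^ k)
        - ((1 - 2 * a / d) * b / (2 * a + 1)) * z *
          ∑' k : ℕ, poch ((b + 1) / 2) k * poch (b / 2 + 1) k /
            (poch (a + 3 / 2) k * k.factorial) * (z ^ 2) ^ k)
      (Metric.ball (1 / 3 : ℂ) (2 / 3)) := by
    refine DifferentiableOn.analyticOnNhd (fun z hz => ?_) Metric.isOpen_ball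
    obtain ⟨h1, h2, h3⟩ := region z hz
    have hw : DifferentiableAt ℂ (fun z : ℂ => z ^ 2) z := by fun_prop
    refine DifferentiableAt.differentiableWithinAt (DifferentiableAt.sub ?_
      (DifferentiableAt.mul (by fun_prop) ?_))
    · exact ((subExp_hyp (b / 2) ((b + 1) / 2) (a + 1 / 2) ha1).diff _ h3).comp z hw
    · exact ((subExp_hyp ((b + 1) / 2) (b / 2 + 1) (a + 3 / 2) ha3).diff _ h3).comp z hw
  have h0 : (0 : ℂ) ∈ Metric.ball (1 / 3 : ℂ) (2 / 3) := by
    rw [Metric.mem_ball, dist_eq_norm]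
    norm_num
  have hz : (z : ℂ) ∈ Metric.ball (1 / 3 : ℂ) (2 / 3) := by
    rw [Metric.mem_ball, dist_eq_norm, show (z : ℂ) - 1 / 3 = ((z - 1 / 3 : ℝ) : ℂ) by
      push_cast; ring, Complex.norm_real, Real.norm_eq_abs, abs_lt]
    constructor <;> linarith
  have key := hL.eqOn_of_preconnected_of_eventuallyEq hR
    (convex_ball (1 / 3 : ℂ) (2 / 3)).isPreconnected h0 (by
      filter_upwards [Metric.ball_mem_nhds (0 : ℂ) (show (0 : ℝ) < 1 / 16 by norm_num)] with w hw
      exact local_eq a b d w h2a1 hd ha1 ha3 (by simpa using hw)) hz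
  simp only at key
  convert key using 1
  · congr 1
    refine tsum_congr fun k => ?_
    have e : tt a d k = poch a k / poch (2 * a + 1) k * (poch (d + 1) k / poch d k) := by
      rw [poch_d d hd, tt]
    rw [e]
    ring
  · congr 1
    · exact tsum_congr fun k => by ring
    · congr 1
      exact tsum_congr fun k => by ring
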